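/- arXiv:2103.14281 — 2 statements merged into one kernel-verified Lean document; each statement's English description precedes it below -/
import Mathlib

section
/- Let X be a complex normed space that is uniformly c-convex with modulus Ω, let n ≥ 1, and let f : 𝔹ⁿ → X be holomorphic. Fix z ∈ 𝔹ⁿ with f(z) ≠ 0, set D_z = {w ∈ ℂⁿ : ‖w − z‖ < 1 − ‖z‖} and M_z = sup{‖f(w)‖ : w ∈ D_z}, and assume M_z is finite with M_z > ‖f(z)‖. Then (1 − ‖z‖)·‖f'(z)‖ ≤ 2‖f(z)‖·Ω((M_z − ‖f(z)‖)/‖f(z)‖). -/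
open Metric Set Filter

/-! The heart of the matter is the inequality `‖f z + λ (r / 2) f'(z) v‖ ≤ M` for `r = 1 - ‖z‖`,
`‖v‖ = 1` and `|λ| ≤ 1`. Testing against a norming functional `ℓ` of the vector on the left reduces
it to the scalar function `h ζ = ℓ (f (z + ζ v))`, which is holomorphic on `|ζ| < r` with
`Re h ≤ M`; the Borel-Carathéodory theorem gives `|h'(0)| ≤ 2 (M - Re h(0)) / r`, and hence
`Re (h(0) + λ (r / 2) h'(0)) ≤ M`. Working with scalar functions means that `X` need not be
complete. After division by `‖f z‖`, uniform c-convexity at `x = f z / ‖f z‖` bounds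
`(r / 2) ‖f'(z) v‖ / ‖f z‖` by `Ω ((M - ‖f z‖) / ‖f z‖)`, and `v` is arbitrary. -/

/-- Derivative form of the Borel-Carathéodory theorem, obtained from Mathlib's growth estimate by
letting the point tend to `0`. -/
lemma norm_deriv_le_of_re_le {h : ℂ → ℂ} {R M : ℝ} {d : ℂ} (hR : 0 < R)
    (hd : DifferentiableOn ℂ h (ball 0 R)) (hM : ∀ ζ ∈ ball (0 : ℂ) R, (h ζ).re ≤ M)
    (h0 : (h 0).re < M) (hder : HasDerivAt h d 0) :
    ‖d‖ ≤ 2 * (M - (h 0).re) / R := by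
  have hbc : ∀ ζ ∈ ball (0 : ℂ) R,
      ‖h ζ - h 0‖ ≤ 2 * (M - (h 0).re) * ‖ζ‖ / (R - ‖ζ‖) := fun ζ hζ =>
    Complex.borelCaratheodory_zero (f := fun ζ => h ζ - h 0) (sub_pos.2 h0) (hd.sub_const _)
      (fun w hw => by simpa using hM w hw) hR hζ (sub_self _)
  have hslope := (hasDerivAt_iff_tendsto_slope.1 hder).norm
  have hlim : Tendsto (fun ζ : ℂ => 2 * (M - (h 0).re) / (R - ‖ζ‖)) (nhdsWithin 0 {0}ᶜ)
      (nhds (2 * (M - (h 0).re) / R)) := by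
    have hc : ContinuousAt (fun ζ : ℂ => 2 * (M - (h 0).re) / (R - ‖ζ‖)) 0 := by
      refine ContinuousAt.div (by fun_prop) (by fun_prop) ?_
      simpa using hR.ne'
    simpa using hc.tendsto.mono_left nhdsWithin_le_nhds
  refine le_of_tendsto_of_tendsto hslope hlim ?_
  filter_upwards [self_mem_nhdsWithin, mem_nhdsWithin_of_mem_nhds (ball_mem_nhds (0 : ℂ) hR)]
    with ζ hne hζ
  have hpos : 0 < ‖ζ‖ := norm_pos_iff.2 hne
  rw [slope_def_field, sub_zero, norm_div, div_le_iff₀ hpos]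
  exact (hbc ζ hζ).trans_eq (by ring)

/-- A function bounded by `M` on a ball of radius `r` satisfies `‖f z + λ (r / 2) f'(z) v‖ ≤ M` for
all `|λ| ≤ 1` and unit vectors `v`. -/
lemma norm_add_smul_fderiv_le {E X : Type*} [NormedAddCommGroup E] [NormedSpace ℂ E]
    [NormedAddCommGroup X] [NormedSpace ℂ X] {f : E → X} {z v : E} {r M : ℝ} (hr : 0 < r)
    (hf : DifferentiableOn ℂ f (ball z r)) (hM : ∀ w ∈ ball z r, ‖f w‖ ≤ M) (hz : ‖f z‖ < M)
    (hv : ‖v‖ = 1) {lam : ℂ} (hlam : ‖lam‖ ≤ 1) :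
    ‖f z + lam • ((r / 2 : ℝ) : ℂ) • fderiv ℂ f z v‖ ≤ M := by
  obtain ⟨l, hl1, hl⟩ :=
    exists_dual_vector'' ℂ (f z + lam • ((r / 2 : ℝ) : ℂ) • fderiv ℂ f z v)
  have hre : ∀ x : X, (l x).re ≤ ‖x‖ := fun x =>
    (Complex.re_le_norm _).trans ((l.le_of_opNorm_le hl1 x).trans_eq (one_mul _))
  have hmaps : MapsTo (fun ζ : ℂ => z + ζ • v) (ball 0 r) (ball z r) := fun ζ hζ => by
    simpa [norm_smul, hv] using hζ
  have hline : ∀ ζ : ℂ, HasDerivAt (fun ζ : ℂ => z + ζ • v) v ζ := fun ζ => by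
    simpa using ((hasDerivAt_id ζ).smul_const v).const_add z
  have hfz : HasFDerivAt f (fderiv ℂ f z) (z + (0 : ℂ) • v) := by
    simpa using ((hf z (mem_ball_self hr)).differentiableAt (ball_mem_nhds z hr)).hasFDerivAt
  have hder : HasDerivAt (fun ζ : ℂ => l (f (z + ζ • v))) (l (fderiv ℂ f z v)) 0 :=
    l.hasFDerivAt.comp_hasDerivAt 0 (hfz.comp_hasDerivAt 0 (hline 0))
  have hdiff : DifferentiableOn ℂ (fun ζ : ℂ => l (f (z + ζ • v))) (ball 0 r) :=
    l.differentiable.comp_differentiableOn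
      (hf.comp (fun ζ _ => (hline ζ).differentiableAt.differentiableWithinAt) hmaps)
  have hbound := norm_deriv_le_of_re_le hr hdiff
    (fun ζ hζ => (hre _).trans (hM _ (hmaps hζ))) (by simpa using (hre (f z)).trans_lt hz) hder
  simp only [zero_smul, add_zero] at hbound
  have hterm : (lam * (((r / 2 : ℝ) : ℂ) * l (fderiv ℂ f z v))).re ≤ M - (l (f z)).re := by
    refine (Complex.re_le_norm _).trans ?_
    rw [norm_mul, norm_mul, Complex.norm_of_nonneg (by positivity)]
    rw [le_div_iff₀ hr] at hbound
    calc ‖lam‖ * (r / 2 * ‖l (fderiv ℂ f z v)‖)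
        ≤ 1 * (r / 2 * ‖l (fderiv ℂ f z v)‖) := by gcongr
      _ ≤ M - (l (f z)).re := by linarith
  have hl' := congrArg Complex.re hl
  simp only [map_add, map_smul, smul_eq_mul, Complex.add_re] at hl'
  calc _ = _ := (Complex.ofReal_re _).symm
    _ = _ := hl'.symm
    _ ≤ M := by linarith

theorem fderiv_bound_via_uniform_c_convexity
    {X : Type*} [NormedAddCommGroup X] [NormedSpace ℂ X]
    (Ω : ℝ → ℝ) (hΩpos : ∀ δ : ℝ, 0 < δ → 0 < Ω δ)
    (hΩmono : MonotoneOn Ω (Set.Ioi 0))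
    (hΩ0 : Filter.Tendsto Ω (nhdsWithin 0 (Set.Ioi 0)) (nhds 0))
    (hucc : ∀ x y : X, ‖x‖ = 1 → ∀ δ : ℝ, 0 < δ →
      (∀ lam : ℂ, ‖lam‖ ≤ 1 → ‖x + lam • y‖ ≤ 1 + δ) → ‖y‖ ≤ Ω δ)
    (n : ℕ) (hn : 1 ≤ n)
    (f : EuclideanSpace ℂ (Fin n) → X)
    (hf : DifferentiableOn ℂ f (Metric.ball 0 1))
    (z : EuclideanSpace ℂ (Fin n)) (hz : z ∈ Metric.ball (0 : EuclideanSpace ℂ (Fin n)) 1)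
    (hfz : f z ≠ 0)
    (M : ℝ) (hM : M = sSup ((fun w => ‖f w‖) '' Metric.ball z (1 - ‖z‖)))
    (hbdd : BddAbove ((fun w => ‖f w‖) '' Metric.ball z (1 - ‖z‖)))
    (hMgt : ‖f z‖ < M) :
    (1 - ‖z‖) * ‖fderiv ℂ f z‖ ≤ 2 * ‖f z‖ * Ω ((M - ‖f z‖) / ‖f z‖) := by
  have hr : 0 < 1 - ‖z‖ := by simpa using hz
  have hpos : 0 < ‖f z‖ := norm_pos_iff.2 hfz
  have hne : (‖f z‖ : ℂ) ≠ 0 := by exact_mod_cast hpos.ne'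
  have hδ : 0 < (M - ‖f z‖) / ‖f z‖ := div_pos (sub_pos.2 hMgt) hpos
  have hsub : ball z (1 - ‖z‖) ⊆ ball 0 1 := ball_subset_ball' (by simp)
  have hle : ∀ w ∈ ball z (1 - ‖z‖), ‖f w‖ ≤ M := fun w hw =>
    hM ▸ le_csSup hbdd (mem_image_of_mem _ hw)
  have hΩ := hΩpos _ hδ
  rw [← le_div_iff₀' hr]
  refine ContinuousLinearMap.opNorm_le_of_unit_norm (by positivity) fun v hv => ?_
  have key := hucc ((‖f z‖ : ℂ)⁻¹ • f z)
    ((‖f z‖ : ℂ)⁻¹ • (((1 - ‖z‖) / 2 : ℝ) : ℂ) • fderiv ℂ f z v)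
    (by rw [norm_smul, norm_inv, Complex.norm_of_nonneg hpos.le, inv_mul_cancel₀ hpos.ne'])
    _ hδ fun lam hlam => by
      rw [smul_comm lam, ← smul_add, norm_smul, norm_inv, Complex.norm_of_nonneg hpos.le,
        inv_mul_le_iff₀ hpos]
      refine (norm_add_smul_fderiv_le hr (hf.mono hsub) hle hMgt hv hlam).trans_eq ?_
      field_simp
      ring
  rw [norm_smul, norm_smul, norm_inv, Complex.norm_of_nonneg hpos.le,
    Complex.norm_of_nonneg (by positivity), inv_mul_le_iff₀ hpos] at key
  rw [le_div_iff₀ hr]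
  linarith
end

section
/- Let n ≥ 1, let X be a complex Banach space, let ω be a Dini majorant, and let f : 𝔹ⁿ → X be a holomorphic function satisfying ‖f'(z)‖ ≤ ω(1 − ‖z‖)/(1 − ‖z‖) for every z ∈ 𝔹ⁿ. Then f ∈ Lip(ω̃, 𝔹ⁿ, X), i.e., there is a constant C such that ‖f(a) − f(b)‖ ≤ C·ω̃(‖a − b‖) for all a, b ∈ 𝔹ⁿ. -/
/-!
Write `g t = ω t / t`, a nonnegative nonincreasing function on `(0, ∞)`, integrable near `0`.
For `a, b` in the ball put `h = ‖a - b‖ / 2 < 1` and join `a` to `b` through `(1 - h) • a` and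
`(1 - h) • b`.

* On the radial piece `s ↦ (1 - s) • a`, `0 < s ≤ h`, the distance to the sphere is at least `s`, so
  the speed of `f` is at most `g s` and `f` moves by at most `∫₀ʰ g = ω̃ h` (`norm_radial_le`).
* The segment between the two shrunken points stays in the ball of radius `1 - h`, where `f` is
  `g h`-Lipschitz, so `f` moves by at most `2 h g h`, and `h g h ≤ ω̃ h` because `g` is
  nonincreasing (`mul_le_omegaTilde`).

Altogether `‖f a - f b‖ ≤ 4 ω̃ h ≤ 4 ω̃ ‖a - b‖`.
-/

open Metric Set Filter

/-- A majorant: continuous, increasing, vanishing at `0`, with `t ↦ ω t / t`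
nonincreasing on `(0, ∞)`. -/
def Majorant (ω : ℝ → ℝ) : Prop :=
  ContinuousOn ω (Set.Ici 0) ∧ MonotoneOn ω (Set.Ici 0) ∧ ω 0 = 0 ∧
    AntitoneOn (fun t => ω t / t) (Set.Ioi 0)

/-- A Dini majorant: a majorant with `∫₀¹ ω t / t dt < ∞`. -/
def DiniMajorant (ω : ℝ → ℝ) : Prop :=
  Majorant ω ∧ MeasureTheory.IntegrableOn (fun t => ω t / t) (Set.Ioc 0 1)

/-- `ω̃ t = ∫₀ᵗ ω x / x dx`. -/
noncomputable def omegaTilde (ω : ℝ → ℝ) (t : ℝ) : ℝ :=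
  ∫ x in Set.Ioc 0 t, ω x / x

theorem Majorant.nonneg {ω : ℝ → ℝ} (hω : Majorant ω) {t : ℝ} (ht : 0 ≤ t) : 0 ≤ ω t := by
  have := hω.2.1 (mem_Ici.2 le_rfl) (mem_Ici.2 ht) ht
  rwa [hω.2.2.1] at this

theorem Majorant.continuousOn_div {ω : ℝ → ℝ} (hω : Majorant ω) :
    ContinuousOn (fun t => ω t / t) (Ioi 0) :=
  (hω.1.mono Ioi_subset_Ici_self).div continuousOn_id fun _ hx => (ne_of_gt hx)

theorem DiniMajorant.integrableOn {ω : ℝ → ℝ} (hω : DiniMajorant ω) (t : ℝ) :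
    MeasureTheory.IntegrableOn (fun t => ω t / t) (Ioc 0 t) := by
  have h2 : MeasureTheory.IntegrableOn (fun t => ω t / t) (Icc 1 t) :=
    (hω.1.continuousOn_div.mono fun x hx => lt_of_lt_of_le one_pos hx.1).integrableOn_Icc
  refine (hω.2.union h2).mono_set fun x hx => ?_
  rcases le_total x 1 with h | h
  · exact Or.inl ⟨hx.1, h⟩
  · exact Or.inr ⟨h, hx.2⟩

theorem omegaTilde_mono {ω : ℝ → ℝ} (hω : DiniMajorant ω) {s t : ℝ} (hst : s ≤ t) :
    omegaTilde ω s ≤ omegaTilde ω t := by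
  refine MeasureTheory.setIntegral_mono_set (hω.integrableOn t) ?_
    (Ioc_subset_Ioc_right hst).eventuallyLE
  filter_upwards [MeasureTheory.ae_restrict_mem measurableSet_Ioc] with x hx
  exact div_nonneg (hω.1.nonneg hx.1.le) hx.1.le

theorem omegaTilde_nonneg {ω : ℝ → ℝ} (hω : DiniMajorant ω) (t : ℝ) : 0 ≤ omegaTilde ω t :=
  MeasureTheory.setIntegral_nonneg measurableSet_Ioc fun _ hx =>
    div_nonneg (hω.1.nonneg hx.1.le) hx.1.le

/-- As `ω x / x` is nonincreasing, its integral over `(0, h]` is at least `h` times its value at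
the right endpoint. -/
theorem mul_le_omegaTilde {ω : ℝ → ℝ} (hω : DiniMajorant ω) {h : ℝ} (hh : 0 < h) :
    h * (ω h / h) ≤ omegaTilde ω h := by
  have h1 : ∫ _ in Ioc 0 h, ω h / h = h * (ω h / h) := by
    simp [hh.le]
  rw [← h1]
  refine MeasureTheory.setIntegral_mono_on (by simp) (hω.integrableOn h) measurableSet_Ioc ?_
  intro x hx
  exact hω.1.2.2.2 hx.1 hh hx.2

theorem hasDerivAt_omegaTilde {ω : ℝ → ℝ} (hω : DiniMajorant ω) {t : ℝ} (ht : 0 < t) :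
    HasDerivAt (omegaTilde ω) (ω t / t) t := by
  have h1 : HasDerivAt (fun u => ∫ x in (0 : ℝ)..u, ω x / x) (ω t / t) t := by
    refine intervalIntegral.integral_hasDerivAt_right ?_ ?_ ?_
    · rw [intervalIntegrable_iff_integrableOn_Ioc_of_le ht.le]
      exact hω.integrableOn t
    · exact hω.1.continuousOn_div.stronglyMeasurableAtFilter isOpen_Ioi t ht
    · exact hω.1.continuousOn_div.continuousAt (Ioi_mem_nhds ht)
  refine h1.congr_of_eventuallyEq ?_
  filter_upwards [Ioi_mem_nhds ht] with u hu
  exact (intervalIntegral.integral_of_le (le_of_lt hu)).symm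

/-- The radial estimate, valid in any complex normed space: moving from `a` to `(1 - h) • a` changes
`f` by at most `omegaTilde ω h`. -/
theorem norm_radial_le {E X : Type*} [NormedAddCommGroup E] [NormedSpace ℂ E]
    [NormedAddCommGroup X] [NormedSpace ℂ X] {ω : ℝ → ℝ} (hω : DiniMajorant ω) {f : E → X}
    (hf : DifferentiableOn ℂ f (ball 0 1))
    (hbound : ∀ z ∈ ball (0 : E) 1, ‖fderiv ℂ f z‖ ≤ ω (1 - ‖z‖) / (1 - ‖z‖))
    {a : E} (ha : a ∈ ball (0 : E) 1) {h : ℝ} (h0 : 0 < h) (h1 : h < 1) :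
    ‖f ((1 - (h : ℂ)) • a) - f a‖ ≤ omegaTilde ω h := by
  have ha' : ‖a‖ < 1 := by simpa using ha
  have hnorm : ∀ s ∈ Icc 0 h, ‖(1 - (s : ℂ)) • a‖ = (1 - s) * ‖a‖ := by
    intro s hs
    have : (1 - (s : ℂ)) = ((1 - s : ℝ) : ℂ) := by push_cast; rfl
    rw [norm_smul, this, Complex.norm_real, Real.norm_of_nonneg (by linarith [hs.2])]
  have hmem : ∀ s ∈ Icc 0 h, (1 - (s : ℂ)) • a ∈ ball (0 : E) 1 := by
    intro s hs
    rw [mem_ball_zero_iff, hnorm s hs]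
    nlinarith [hs.1, norm_nonneg a]
  have hder : ∀ s ∈ Icc 0 h, HasDerivAt (fun s : ℝ => f ((1 - (s : ℂ)) • a))
      (fderiv ℂ f ((1 - (s : ℂ)) • a) (-a)) s := by
    intro s hs
    have hd := (hf.differentiableAt (isOpen_ball.mem_nhds (hmem s hs))).hasFDerivAt
    have hγ : HasDerivAt (fun s : ℝ => (1 - (s : ℂ)) • a) (-a) s := by
      simpa using ((hasDerivAt_id s).ofReal_comp.const_sub 1).smul_const a
    exact (hd.restrictScalars ℝ).comp_hasDerivAt s hγ
  -- `ω x / x` may blow up at `0`, so the mean value inequality is used on `[ε, h]` first.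
  have key : ∀ ε ∈ Ioc 0 h,
      ‖f ((1 - (h : ℂ)) • a) - f ((1 - (ε : ℂ)) • a)‖ ≤ omegaTilde ω h := by
    intro ε hε
    have hsub : ∀ s ∈ Icc ε h, s ∈ Icc 0 h := fun s hs => ⟨hε.1.le.trans hs.1, hs.2⟩
    have := image_norm_le_of_norm_deriv_right_le_deriv_boundary'
      (f := fun s : ℝ => f ((1 - (s : ℂ)) • a) - f ((1 - (ε : ℂ)) • a))
      (f' := fun s : ℝ => fderiv ℂ f ((1 - (s : ℂ)) • a) (-a))
      (a := ε) (b := h) (B := omegaTilde ω) (B' := fun s => ω s / s)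
      (fun s hs => ((hder s (hsub s hs)).sub_const _).continuousAt.continuousWithinAt)
      (fun s hs => ((hder s (hsub s (Ico_subset_Icc_self hs))).sub_const _).hasDerivWithinAt)
      (by simpa using omegaTilde_nonneg hω ε)
      (fun s hs => (hasDerivAt_omegaTilde hω
        (hε.1.trans_le hs.1)).continuousAt.continuousWithinAt)
      (fun s hs => (hasDerivAt_omegaTilde hω (hε.1.trans_le hs.1)).hasDerivWithinAt)
      (fun s hs => ?_)
    · exact this (right_mem_Icc.2 hε.2)
    · have hs0 : 0 < s := hε.1.trans_le hs.1
      have hs' := hsub s (Ico_subset_Icc_self hs)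
      have hle : s ≤ 1 - (1 - s) * ‖a‖ := by nlinarith [hs'.2, norm_nonneg a]
      have hb := hbound _ (hmem s hs')
      rw [hnorm s hs'] at hb
      have hg := hω.1.2.2.2 (mem_Ioi.2 hs0) (mem_Ioi.2 (hs0.trans_le hle)) hle
      calc ‖fderiv ℂ f ((1 - (s : ℂ)) • a) (-a)‖
          ≤ ‖fderiv ℂ f ((1 - (s : ℂ)) • a)‖ * ‖-a‖ := ContinuousLinearMap.le_opNorm _ _
        _ ≤ ‖fderiv ℂ f ((1 - (s : ℂ)) • a)‖ * 1 := by
            rw [norm_neg]; gcongr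
        _ ≤ ω s / s := by rw [mul_one]; exact hb.trans hg
  have hcont : Tendsto (fun ε : ℝ => ‖f ((1 - (h : ℂ)) • a) - f ((1 - (ε : ℂ)) • a)‖)
      (nhdsWithin 0 (Ioi 0)) (nhds ‖f ((1 - (h : ℂ)) • a) - f a‖) := by
    have hc := (hder 0 ⟨le_rfl, h0.le⟩).continuousAt.tendsto
    simp only [Complex.ofReal_zero, sub_zero, one_smul] at hc
    exact ((tendsto_const_nhds.sub hc).norm).mono_left nhdsWithin_le_nhds
  refine le_of_tendsto hcont ?_
  filter_upwards [Ioc_mem_nhdsGT h0] with ε hε using key ε hε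

theorem fderiv_bound_implies_lipschitz_tilde
    {X : Type*} [NormedAddCommGroup X] [NormedSpace ℂ X] [CompleteSpace X]
    (n : ℕ) (hn : 1 ≤ n) (ω : ℝ → ℝ) (hω : DiniMajorant ω)
    (f : EuclideanSpace ℂ (Fin n) → X)
    (hf : DifferentiableOn ℂ f (Metric.ball 0 1))
    (hbound : ∀ z ∈ Metric.ball (0 : EuclideanSpace ℂ (Fin n)) 1,
      ‖fderiv ℂ f z‖ ≤ ω (1 - ‖z‖) / (1 - ‖z‖)) :
    ∃ C : ℝ, ∀ a ∈ Metric.ball (0 : EuclideanSpace ℂ (Fin n)) 1,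
      ∀ b ∈ Metric.ball (0 : EuclideanSpace ℂ (Fin n)) 1,
        ‖f a - f b‖ ≤ C * omegaTilde ω ‖a - b‖ := by
  refine ⟨4, fun a ha b hb => ?_⟩
  rcases eq_or_ne a b with rfl | hab
  · simpa using omegaTilde_nonneg hω 0
  have ha' : ‖a‖ < 1 := by simpa using ha
  have hb' : ‖b‖ < 1 := by simpa using hb
  have hd : 0 < ‖a - b‖ := norm_pos_iff.2 (sub_ne_zero.2 hab)
  have hd2 : ‖a - b‖ < 2 := (norm_sub_le a b).trans_lt (by linarith)
  obtain ⟨h, hh⟩ : ∃ h, h = ‖a - b‖ / 2 := ⟨_, rfl⟩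
  have h0 : 0 < h := by rw [hh]; positivity
  have h1 : h < 1 := by linarith
  have hra := norm_radial_le hω hf hbound ha h0 h1
  have hrb := norm_radial_le hω hf hbound hb h0 h1
  have hc : ‖1 - (h : ℂ)‖ = 1 - h := by
    have : (1 - (h : ℂ)) = ((1 - h : ℝ) : ℂ) := by push_cast; rfl
    rw [this, Complex.norm_real, Real.norm_of_nonneg (by linarith)]
  have hmem : ∀ z : EuclideanSpace ℂ (Fin n), ‖z‖ < 1 →
      (1 - (h : ℂ)) • z ∈ closedBall (0 : EuclideanSpace ℂ (Fin n)) (1 - h) := by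
    intro z hz
    rw [mem_closedBall_zero_iff, norm_smul, hc]
    nlinarith [norm_nonneg z]
  have hmid : ‖f ((1 - (h : ℂ)) • a) - f ((1 - (h : ℂ)) • b)‖
      ≤ ω h / h * ‖(1 - (h : ℂ)) • a - (1 - (h : ℂ)) • b‖ := by
    have hsub : closedBall (0 : EuclideanSpace ℂ (Fin n)) (1 - h) ⊆ ball 0 1 :=
      closedBall_subset_ball (by linarith)
    refine (convex_closedBall (0 : EuclideanSpace ℂ (Fin n)) (1 - h)).norm_image_sub_le_of_norm_fderiv_le
      (𝕜 := ℂ) (fun z hz => hf.differentiableAt (isOpen_ball.mem_nhds (hsub hz))) (fun z hz => ?_)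
      (hmem b hb') (hmem a ha')
    have hz' : h ≤ 1 - ‖z‖ := by
      have := mem_closedBall_zero_iff.1 hz
      linarith
    exact (hbound z (hsub hz)).trans
      (hω.1.2.2.2 (mem_Ioi.2 h0) (mem_Ioi.2 (h0.trans_le hz')) hz')
  have hg : 0 ≤ ω h / h := div_nonneg (hω.1.nonneg h0.le) h0.le
  have hlen : ‖(1 - (h : ℂ)) • a - (1 - (h : ℂ)) • b‖ ≤ 2 * h := by
    rw [← smul_sub, norm_smul, hc]
    nlinarith
  have hmid' : ‖f ((1 - (h : ℂ)) • a) - f ((1 - (h : ℂ)) • b)‖ ≤ 2 * omegaTilde ω h := by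
    have := mul_le_omegaTilde hω h0
    have := mul_le_mul_of_nonneg_left hlen hg
    linarith
  have hmono : omegaTilde ω h ≤ omegaTilde ω ‖a - b‖ := omegaTilde_mono hω (by linarith)
  have htri : ‖f a - f b‖ ≤ ‖f ((1 - (h : ℂ)) • a) - f a‖
      + ‖f ((1 - (h : ℂ)) • a) - f ((1 - (h : ℂ)) • b)‖ + ‖f ((1 - (h : ℂ)) • b) - f b‖ := by
    rw [norm_sub_rev (f ((1 - (h : ℂ)) • a)) (f a)]
    calc ‖f a - f b‖ = ‖(f a - f ((1 - (h : ℂ)) • a))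
          + (f ((1 - (h : ℂ)) • a) - f ((1 - (h : ℂ)) • b)) + (f ((1 - (h : ℂ)) • b) - f b)‖ := by
          congr 1; abel
      _ ≤ _ := norm_add₃_le
  linarith
end
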